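/- Let N be a positive integer, C : ℤ → [0,∞), and let ∥·∥ be a norm on ℝ^N such that for every subset K ⊆ {1, …, N} one has ∥Σ_{k∈K} e_k∥ = C(#K), where (e_k) is the standard basis of ℝ^N. Then C(x)/x ≤ C(y)/y for all integers 1 ≤ y ≤ x ≤ N. -/

import Mathlib

/-- `f` is a norm on the real vector space `E`. -/
def IsNorm {E : Type*} [AddCommGroup E] [Module ℝ E] (f : E → ℝ) : Prop :=
  (∀ x, 0 ≤ f x) ∧ (∀ x, f x = 0 ↔ x = 0) ∧
    (∀ x y, f (x + y) ≤ f x + f y) ∧ ∀ (c : ℝ) (x : E), f (c • x) = |c| * f x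

/-! Each element of a finite set `s` lies in `(#s - 1).choose (k - 1)` of the `(#s).choose k`
subsets of size `k`, so `∑ i ∈ s, v i` is, up to this multiplicity, the sum of the vectors
`∑ i ∈ K, v i` over those subsets `K`. Subadditivity and homogeneity of `p` then bound
`p (∑ i ∈ s, v i) / #s` by the average of `p (∑ i ∈ K, v i) / k` over `K`. -/

section

open Finset

theorem sum_pi_single_one {ι R : Type*} [DecidableEq ι] [AddCommMonoidWithOne R] (K : Finset ι) :
    ∑ k ∈ K, Pi.single k (1 : R) = fun j => if j ∈ K then 1 else 0 := by
  ext j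
  rw [Finset.sum_apply, sum_pi_single]

variable {ι E : Type*} [AddCommMonoid E]

theorem sum_powersetCard_sum (s : Finset ι) (k : ℕ) (v : ι → E) :
    ∑ K ∈ powersetCard (k + 1) s, ∑ i ∈ K, v i = (#s - 1).choose k • ∑ i ∈ s, v i := by
  classical
  have card_filter_mem (i : ι) (hi : i ∈ s) :
      #{K ∈ powersetCard (k + 1) s | i ∈ K} = (#s - 1).choose k := by
    simpa using card_filter_powersetCard_subset {i} s (k + 1) (singleton_subset_iff.2 hi)
  calc ∑ K ∈ powersetCard (k + 1) s, ∑ i ∈ K, v i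
      = ∑ i ∈ s, ∑ K ∈ powersetCard (k + 1) s with i ∈ K, v i :=
        sum_comm' fun K i => by
          simp only [mem_powersetCard, mem_filter]
          exact ⟨fun ⟨hK, hi⟩ => ⟨⟨hK, hi⟩, hK.1 hi⟩, fun ⟨hK, _⟩ => hK⟩
    _ = ∑ i ∈ s, (#s - 1).choose k • v i :=
        sum_congr rfl fun i hi => by rw [sum_const, card_filter_mem i hi]
    _ = (#s - 1).choose k • ∑ i ∈ s, v i := (smul_sum ..).symm

variable {𝕜 : Type*} [Field 𝕜] [LinearOrder 𝕜] [IsStrictOrderedRing 𝕜] {p : E → 𝕜}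

theorem choose_mul_map_sum_le_of_forall_powersetCard
    (hadd : ∀ x y, p (x + y) ≤ p x + p y) (hsmul : ∀ (n : ℕ) x, p (n • x) = n * p x)
    {v : ι → E} {s : Finset ι} {k : ℕ} {b : 𝕜}
    (hb : ∀ K ∈ powersetCard (k + 1) s, p (∑ i ∈ K, v i) ≤ b) :
    (#s - 1).choose k * p (∑ i ∈ s, v i) ≤ (#s).choose (k + 1) * b := by
  have hzero : p 0 ≤ 0 := by simpa using (hsmul 0 0).le
  calc (#s - 1).choose k * p (∑ i ∈ s, v i)
      = p (∑ K ∈ powersetCard (k + 1) s, ∑ i ∈ K, v i) := by rw [sum_powersetCard_sum, hsmul]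
    _ ≤ ∑ K ∈ powersetCard (k + 1) s, p (∑ i ∈ K, v i) := le_sum_of_subadditive p hzero hadd _ _
    _ ≤ #(powersetCard (k + 1) s) • b := sum_le_card_nsmul _ _ b hb
    _ = (#s).choose (k + 1) * b := by rw [card_powersetCard, nsmul_eq_mul]

theorem map_sum_div_card_le_of_forall_powersetCard
    (hadd : ∀ x y, p (x + y) ≤ p x + p y) (hsmul : ∀ (n : ℕ) x, p (n • x) = n * p x)
    {v : ι → E} {s : Finset ι} {k : ℕ} (hk : 0 < k) (hks : k ≤ #s) {b : 𝕜}
    (hb : ∀ K ∈ powersetCard k s, p (∑ i ∈ K, v i) ≤ b) :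
    p (∑ i ∈ s, v i) / #s ≤ b / k := by
  obtain ⟨k, rfl⟩ := Nat.exists_eq_add_one.2 hk
  obtain ⟨m, hm⟩ := Nat.exists_eq_add_one.2 (hk.trans_le hks)
  have hsum := choose_mul_map_sum_le_of_forall_powersetCard hadd hsmul hb
  rw [hm, Nat.add_sub_cancel] at hsum
  rw [hm] at hks ⊢
  have hchoose : ((m + 1 : ℕ) : 𝕜) * m.choose k = (m + 1).choose (k + 1) * (k + 1 : ℕ) :=
    mod_cast Nat.add_one_mul_choose_eq m k
  have hchoose_pos : (0 : 𝕜) < (m + 1).choose (k + 1) := mod_cast Nat.choose_pos hks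
  rw [div_le_div_iff₀ (mod_cast m.succ_pos) (mod_cast hk)]
  refine le_of_mul_le_mul_left ?_ hchoose_pos
  calc (m + 1).choose (k + 1) * (p (∑ i ∈ s, v i) * (k + 1 : ℕ))
      = (m + 1 : ℕ) * (m.choose k * p (∑ i ∈ s, v i)) := by
        linear_combination -p (∑ i ∈ s, v i) * hchoose
    _ ≤ (m + 1 : ℕ) * ((m + 1).choose (k + 1) * b) := by gcongr
    _ = (m + 1).choose (k + 1) * (b * (m + 1 : ℕ)) := by ring

theorem compatible_norm_implies_sublinear_general
    (hadd : ∀ x y, p (x + y) ≤ p x + p y) (hsmul : ∀ (n : ℕ) x, p (n • x) = n * p x)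
    {v : ι → E} {s : Finset ι} {C : ℤ → 𝕜} (hcompat : ∀ K ⊆ s, p (∑ i ∈ K, v i) = C #K)
    {x y : ℤ} (hy : 1 ≤ y) (hyx : y ≤ x) (hx : x ≤ #s) :
    C x / x ≤ C y / y := by
  lift y to ℕ using by lia
  lift x to ℕ using by lia
  obtain ⟨t, hts, rfl⟩ := exists_subset_card_eq (Nat.cast_le.1 hx)
  have hb (K : Finset ι) (hK : K ∈ powersetCard y t) : p (∑ i ∈ K, v i) ≤ C y := by
    obtain ⟨hKt, rfl⟩ := mem_powersetCard.1 hK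
    exact (hcompat K (hKt.trans hts)).le
  rw [← hcompat t hts]
  exact_mod_cast map_sum_div_card_le_of_forall_powersetCard hadd hsmul (by lia) (by lia) hb

end

theorem IsNorm.map_nsmul {E : Type*} [AddCommGroup E] [Module ℝ E] {f : E → ℝ} (hf : IsNorm f)
    (n : ℕ) (x : E) : f (n • x) = n * f x := by
  obtain ⟨-, -, -, map_smul⟩ := hf
  rw [← Nat.cast_smul_eq_nsmul ℝ, map_smul, Nat.abs_cast]

/-- Let `N` be a positive integer, `C : ℤ → [0,∞)`, and let `nrm`
be a norm on `ℝ^N` such that for every subset `K ⊆ {1, …, N}` one has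
`∥∑_{k ∈ K} e_k∥ = C(#K)`. Then `C(x)/x ≤ C(y)/y` for all integers
`1 ≤ y ≤ x ≤ N`. -/
theorem compatible_norm_implies_sublinear
    (N : ℕ) (hN : 0 < N)
    (C : ℤ → ℝ) (hC0 : ∀ z, 0 ≤ C z)
    (nrm : (Fin N → ℝ) → ℝ) (hnrm : IsNorm nrm)
    (hcompat : ∀ K : Finset (Fin N),
      nrm (fun j => if j ∈ K then (1 : ℝ) else 0) = C (K.card : ℤ)) :
    ∀ x y : ℤ, 1 ≤ y → y ≤ x → x ≤ (N : ℤ) → C x / (x : ℝ) ≤ C y / (y : ℝ) := by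
  intro x y hy hyx hx
  exact compatible_norm_implies_sublinear_general hnrm.2.2.1 hnrm.map_nsmul (s := Finset.univ)
    (fun K _ => (congrArg nrm (sum_pi_single_one K)).trans (hcompat K)) hy hyx (by simpa using hx)
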